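/- Let F be the Minkowskian product of Finsler metrics F₁ and F₂ with respect to a product function f. Then at every point (x,y) = ((x₁,x₂),(y₁,y₂)) with y₁ ≠ 0 and y₂ ≠ 0, the Landsberg curvature L_{βγη} = −¼·y^ν·G_{να}·B^α_{βγη} of F satisfies: L_{ijl}(x,y) = f_K·L¹_{ijl}(x₁,y₁) and L_{i'j'l'}(x,y) = f_H·L²_{i'j'l'}(x₂,y₂), where f_K and f_H are evaluated at (K(x₁,y₁), H(x₂,y₂)), and every component with mixed block indices vanishes: L_{i'jl} = L_{ij'l} = L_{ijl'} = L_{i'j'l} = L_{i'jl'} = L_{ij'l'} = 0. Here L¹ and L² are the Landsberg curvatures of F₁ and F₂. -/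

import Mathlib

open Matrix

/-- Partial derivative in the fiber variable `y` in the direction of the `α`-th
coordinate, for a function `g (x, y)` of a base point and a fiber vector. -/
noncomputable def pdy {ι : Type*} [Fintype ι] [DecidableEq ι]
    (g : (ι → ℝ) → (ι → ℝ) → ℝ) (α : ι) : (ι → ℝ) → (ι → ℝ) → ℝ :=
  fun x y => fderiv ℝ (g x) y (Pi.single α 1)

/-- Partial derivative in the base variable `x` in the direction of the `γ`-th
coordinate, for a function `g (x, y)` of a base point and a fiber vector. -/
noncomputable def pdx {ι : Type*} [Fintype ι] [DecidableEq ι]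
    (g : (ι → ℝ) → (ι → ℝ) → ℝ) (γ : ι) : (ι → ℝ) → (ι → ℝ) → ℝ :=
  fun x y => fderiv ℝ (fun x' => g x' y) x (Pi.single γ 1)

/-- The fundamental tensor `(G_{αβ}) = (∂²(F²)/∂y^α∂y^β)` of a Finsler metric `F`. -/
noncomputable def fundTensor {ι : Type*} [Fintype ι] [DecidableEq ι]
    (F : (ι → ℝ) → (ι → ℝ) → ℝ) (x y : ι → ℝ) : Matrix ι ι ℝ :=
  fun α β => pdy (pdy (fun x' y' => (F x' y') ^ 2) β) α x y

/-- `F` is a Finsler metric on the open set `U`: `G = F²` is smooth on the slit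
domain, `F` is positive for `y ≠ 0`, absolutely 1-homogeneous in `y`, and its
fundamental tensor is positive definite for `y ≠ 0`. -/
structure IsFinslerMetric {ι : Type*} [Fintype ι] [DecidableEq ι]
    (U : Set (ι → ℝ)) (F : (ι → ℝ) → (ι → ℝ) → ℝ) : Prop where
  isOpen : IsOpen U
  smooth : ContDiffOn ℝ (⊤ : ℕ∞) (fun p : (ι → ℝ) × (ι → ℝ) => (F p.1 p.2) ^ 2)
    (U ×ˢ {y | y ≠ 0})
  pos : ∀ x ∈ U, ∀ y : ι → ℝ, y ≠ 0 → 0 < F x y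
  homog : ∀ x ∈ U, ∀ (y : ι → ℝ) (c : ℝ), F x (c • y) = |c| * F x y
  posDef : ∀ x ∈ U, ∀ y : ι → ℝ, y ≠ 0 → (fundTensor F x y).PosDef

/-- The geodesic spray coefficients
`𝔾^α = ½ G^{αβ}(∂²G/∂y^β∂x^γ · y^γ − ∂G/∂x^β)` of a Finsler metric `F`. -/
noncomputable def spray {ι : Type*} [Fintype ι] [DecidableEq ι]
    (F : (ι → ℝ) → (ι → ℝ) → ℝ) (α : ι) : (ι → ℝ) → (ι → ℝ) → ℝ :=
  fun x y => (1 / 2) * ∑ β, (fundTensor F x y)⁻¹ α β *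
    ((∑ γ, pdx (pdy (fun x' y' => (F x' y') ^ 2) β) γ x y * y γ) -
      pdx (fun x' y' => (F x' y') ^ 2) β x y)

/-- The Cartan nonlinear connection coefficients `Γ^α_β = ∂𝔾^α/∂y^β`. -/
noncomputable def nonlinConn {ι : Type*} [Fintype ι] [DecidableEq ι]
    (F : (ι → ℝ) → (ι → ℝ) → ℝ) (α β : ι) : (ι → ℝ) → (ι → ℝ) → ℝ :=
  pdy (spray F α) β

/-- The Berwald connection coefficients `Γ̌^α_{β;γ} = ∂Γ^α_γ/∂y^β = ∂²𝔾^α/∂y^β∂y^γ`. -/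
noncomputable def berwaldConn {ι : Type*} [Fintype ι] [DecidableEq ι]
    (F : (ι → ℝ) → (ι → ℝ) → ℝ) (α β γ : ι) : (ι → ℝ) → (ι → ℝ) → ℝ :=
  pdy (nonlinConn F α γ) β

/-- The Berwald curvature `B^α_{βγη} = ∂³𝔾^α/∂y^β∂y^γ∂y^η`. -/
noncomputable def berwaldCurv {ι : Type*} [Fintype ι] [DecidableEq ι]
    (F : (ι → ℝ) → (ι → ℝ) → ℝ) (α β γ η : ι) : (ι → ℝ) → (ι → ℝ) → ℝ :=
  pdy (pdy (pdy (spray F α) η) γ) β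

/-- The mean Berwald curvature `E_{βγ} = ½ B^α_{βγα}` (sum over `α`). -/
noncomputable def meanBerwaldCurv {ι : Type*} [Fintype ι] [DecidableEq ι]
    (F : (ι → ℝ) → (ι → ℝ) → ℝ) (β γ : ι) : (ι → ℝ) → (ι → ℝ) → ℝ :=
  fun x y => (1 / 2) * ∑ α, berwaldCurv F α β γ α x y

/-- The Landsberg curvature `L_{βγη} = −¼ y^ν G_{να} B^α_{βγη}` (sums over `ν, α`). -/
noncomputable def landsbergCurv {ι : Type*} [Fintype ι] [DecidableEq ι]
    (F : (ι → ℝ) → (ι → ℝ) → ℝ) (β γ η : ι) : (ι → ℝ) → (ι → ℝ) → ℝ :=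
  fun x y => -(1 / 4) * ∑ ν, ∑ α, y ν * fundTensor F x y ν α * berwaldCurv F α β γ η x y

/-- The mean Landsberg curvature `J_α = 2 G^{βγ} L_{αβγ}` (sums over `β, γ`). -/
noncomputable def meanLandsbergCurv {ι : Type*} [Fintype ι] [DecidableEq ι]
    (F : (ι → ℝ) → (ι → ℝ) → ℝ) (α : ι) : (ι → ℝ) → (ι → ℝ) → ℝ :=
  fun x y => 2 * ∑ β, ∑ γ, (fundTensor F x y)⁻¹ β γ * landsbergCurv F α β γ x y

/-- Partial derivative of `f : ℝ → ℝ → ℝ` with respect to the first variable. -/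
noncomputable def pderivS (f : ℝ → ℝ → ℝ) (s t : ℝ) : ℝ := deriv (fun u => f u t) s

/-- Partial derivative of `f : ℝ → ℝ → ℝ` with respect to the second variable. -/
noncomputable def pderivT (f : ℝ → ℝ → ℝ) (s t : ℝ) : ℝ := deriv (fun v => f s v) t

/-- `f_st = ∂²f/∂s∂t`. -/
noncomputable def pderivST (f : ℝ → ℝ → ℝ) (s t : ℝ) : ℝ :=
  deriv (fun u => pderivT f u t) s

/-- The data of a Minkowskian product: `F₁, F₂` are Finsler metrics on `U₁, U₂`,
`f` is an admissible product function, and `F = √(f(F₁², F₂²))` is the Minkowskian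
product metric, itself assumed to be a Finsler metric on `U₁ × U₂`. -/
structure IsMinkowskianProduct {m n : ℕ}
    (U₁ : Set (Fin m → ℝ)) (U₂ : Set (Fin n → ℝ))
    (F₁ : (Fin m → ℝ) → (Fin m → ℝ) → ℝ) (F₂ : (Fin n → ℝ) → (Fin n → ℝ) → ℝ)
    (f : ℝ → ℝ → ℝ)
    (F : (Fin m ⊕ Fin n → ℝ) → (Fin m ⊕ Fin n → ℝ) → ℝ) : Prop where
  finsler₁ : IsFinslerMetric U₁ F₁
  finsler₂ : IsFinslerMetric U₂ F₂
  f_cont : ContinuousOn (fun p : ℝ × ℝ => f p.1 p.2) (Set.Ici 0 ×ˢ Set.Ici 0)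
  f_nonneg : ∀ s ∈ Set.Ici (0 : ℝ), ∀ t ∈ Set.Ici (0 : ℝ), 0 ≤ f s t
  f_zero_iff : ∀ s ∈ Set.Ici (0 : ℝ), ∀ t ∈ Set.Ici (0 : ℝ),
    (f s t = 0 ↔ s = 0 ∧ t = 0)
  f_homog : ∀ c ∈ Set.Ici (0 : ℝ), ∀ s ∈ Set.Ici (0 : ℝ), ∀ t ∈ Set.Ici (0 : ℝ),
    f (c * s) (c * t) = c * f s t
  f_smooth : ContDiffOn ℝ (⊤ : ℕ∞) (fun p : ℝ × ℝ => f p.1 p.2)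
    (Set.Ioi 0 ×ˢ Set.Ioi 0)
  fs_ne : ∀ s > (0 : ℝ), ∀ t > (0 : ℝ), pderivS f s t ≠ 0
  ft_ne : ∀ s > (0 : ℝ), ∀ t > (0 : ℝ), pderivT f s t ≠ 0
  delta_ne : ∀ s > (0 : ℝ), ∀ t > (0 : ℝ),
    pderivS f s t * pderivT f s t - 2 * f s t * pderivST f s t ≠ 0
  F_def : ∀ (x y : Fin m ⊕ Fin n → ℝ),
    F x y = Real.sqrt (f ((F₁ (x ∘ Sum.inl) (y ∘ Sum.inl)) ^ 2)
      ((F₂ (x ∘ Sum.inr) (y ∘ Sum.inr)) ^ 2))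
  finsler : IsFinslerMetric
    {x : Fin m ⊕ Fin n → ℝ | (x ∘ Sum.inl) ∈ U₁ ∧ (x ∘ Sum.inr) ∈ U₂} F

set_option linter.unusedSectionVars false
set_option linter.unusedSimpArgs false
set_option linter.unusedVariables false
lemma mp_sum_single {ι : Type*} [Fintype ι] [DecidableEq ι] (L : (ι → ℝ) →L[ℝ] ℝ) (y : ι → ℝ) :
    ∑ i, y i * L (Pi.single i 1) = L y := by
  have h := LinearMap.pi_apply_eq_sum_univ (L : (ι → ℝ) →ₗ[ℝ] ℝ) y
  simp only [ContinuousLinearMap.coe_coe, smul_eq_mul] at h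
  rw [h]
  refine Finset.sum_congr rfl fun i _ => ?_
  congr 2
  ext j
  simp [Pi.single_apply, eq_comm]

lemma mp_euler {E : Type*} [NormedAddCommGroup E] [NormedSpace ℝ E] (u : E → ℝ) (y : E) (k : ℕ)
    (hd : DifferentiableAt ℝ u y) (hh : ∀ c : ℝ, 0 < c → u (c • y) = c ^ k * u y) :
    fderiv ℝ u y y = k * u y := by
  have h1 : HasDerivAt (fun c : ℝ => c • y) y 1 := by
    simpa using (hasDerivAt_id (1 : ℝ)).smul_const y
  have hd' : HasFDerivAt u (fderiv ℝ u y) ((1 : ℝ) • y) := by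
    rw [one_smul]; exact hd.hasFDerivAt
  have h2 : HasDerivAt (fun c : ℝ => u (c • y)) (fderiv ℝ u y y) 1 :=
    hd'.comp_hasDerivAt (1 : ℝ) h1
  have h3 : HasDerivAt (fun c : ℝ => c ^ k * u y) (k * u y) 1 := by
    simpa using (hasDerivAt_pow k (1 : ℝ)).mul_const (u y)
  have h4 : (fun c : ℝ => c ^ k * u y) =ᶠ[nhds 1] fun c : ℝ => u (c • y) := by
    filter_upwards [lt_mem_nhds (zero_lt_one : (0 : ℝ) < 1)] with c hc
    exact (hh c hc).symm
  exact h2.unique (h3.congr_of_eventuallyEq h4.symm)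

lemma mp_fderiv_smul {E : Type*} [NormedAddCommGroup E] [NormedSpace ℝ E] (u : E → ℝ) (y v : E)
    (hh : ∀ z : E, ∀ c : ℝ, 0 < c → u (c • z) = c ^ 2 * u z) (c : ℝ) (hc : 0 < c)
    (hd : DifferentiableAt ℝ u (c • y)) (hd' : DifferentiableAt ℝ u y) :
    fderiv ℝ u (c • y) v = c ^ 1 * fderiv ℝ u y v := by
  have h1 : HasFDerivAt (fun z : E => c • z) (c • ContinuousLinearMap.id ℝ E) y :=
    (hasFDerivAt_id y).const_smul c
  have h2 := hd.hasFDerivAt.comp y h1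
  have h3 : HasFDerivAt (fun z => c ^ 2 * u z) (c ^ 2 • fderiv ℝ u y) y :=
    hd'.hasFDerivAt.const_mul (c ^ 2)
  have h4 : (u ∘ fun z : E => c • z) = fun z => c ^ 2 * u z := by
    ext z; exact hh z c hc
  rw [h4] at h2
  have h5 := congrArg (fun L : E →L[ℝ] ℝ => L v) (h2.unique h3)
  simp at h5
  have : c * fderiv ℝ u (c • y) v = c * (c * fderiv ℝ u y v) := by rw [h5]; ring
  rw [pow_one]
  exact mul_left_cancel₀ hc.ne' this

lemma mp_fderiv_pull {E E' : Type*} [NormedAddCommGroup E] [NormedSpace ℝ E]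
    [NormedAddCommGroup E'] [NormedSpace ℝ E'] (L : E →L[ℝ] E') (R : E' →L[ℝ] E)
    (hLR : ∀ z, L (R z) = z) (u : E' → ℝ) (y v : E) :
    fderiv ℝ (fun y => u (L y)) y v = fderiv ℝ u (L y) (L v) := by
  by_cases h : DifferentiableAt ℝ u (L y)
  · have := h.hasFDerivAt.comp y L.hasFDerivAt
    have h2 : HasFDerivAt (fun y => u (L y)) ((fderiv ℝ u (L y)).comp L) y := this
    rw [h2.fderiv]; rfl
  · have h' : ¬ DifferentiableAt ℝ (fun y => u (L y)) y := by
      intro h1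
      apply h
      have h2 : DifferentiableAt ℝ (fun z => y + R (z - L y)) (L y) := by fun_prop
      have h3 : DifferentiableAt ℝ (fun y => u (L y)) ((fun z => y + R (z - L y)) (L y)) := by
        simpa using h1
      have h4 := h3.comp (L y) h2
      have h5 : ((fun y => u (L y)) ∘ fun z => y + R (z - L y)) = u := by
        ext z
        simp [hLR]
      rwa [h5] at h4
    rw [fderiv_zero_of_not_differentiableAt h, fderiv_zero_of_not_differentiableAt h']
    simp

section pull
variable {ι κ : Type*} [Fintype ι] [Fintype κ] [DecidableEq ι] [DecidableEq κ]

noncomputable def mpProjL (ι κ : Type*) [Fintype ι] [Fintype κ] : (ι ⊕ κ → ℝ) →L[ℝ] (ι → ℝ) :=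
  ContinuousLinearMap.pi fun i => ContinuousLinearMap.proj (Sum.inl i)
noncomputable def mpProjR (ι κ : Type*) [Fintype ι] [Fintype κ] : (ι ⊕ κ → ℝ) →L[ℝ] (κ → ℝ) :=
  ContinuousLinearMap.pi fun i => ContinuousLinearMap.proj (Sum.inr i)
noncomputable def mpInL (ι κ : Type*) [Fintype ι] [Fintype κ] : (ι → ℝ) →L[ℝ] (ι ⊕ κ → ℝ) :=
  ContinuousLinearMap.pi fun s => Sum.elim (fun i => ContinuousLinearMap.proj i) (fun _ => 0) s
noncomputable def mpInR (ι κ : Type*) [Fintype ι] [Fintype κ] : (κ → ℝ) →L[ℝ] (ι ⊕ κ → ℝ) :=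
  ContinuousLinearMap.pi fun s => Sum.elim (fun _ => 0) (fun i => ContinuousLinearMap.proj i) s

def pullL (κ : Type*) (g : (ι → ℝ) → (ι → ℝ) → ℝ) : (ι ⊕ κ → ℝ) → (ι ⊕ κ → ℝ) → ℝ :=
  fun x y => g (x ∘ Sum.inl) (y ∘ Sum.inl)
def pullR (ι : Type*) (g : (κ → ℝ) → (κ → ℝ) → ℝ) : (ι ⊕ κ → ℝ) → (ι ⊕ κ → ℝ) → ℝ :=
  fun x y => g (x ∘ Sum.inr) (y ∘ Sum.inr)

lemma mp_fdL (u : (ι → ℝ) → ℝ) (y v : ι ⊕ κ → ℝ) :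
    fderiv ℝ (fun y : ι ⊕ κ → ℝ => u (y ∘ Sum.inl)) y v
      = fderiv ℝ u (y ∘ Sum.inl) (v ∘ Sum.inl) :=
  mp_fderiv_pull (mpProjL ι κ) (mpInL ι κ) (fun _ => rfl) u y v
lemma mp_fdR (u : (κ → ℝ) → ℝ) (y v : ι ⊕ κ → ℝ) :
    fderiv ℝ (fun y : ι ⊕ κ → ℝ => u (y ∘ Sum.inr)) y v
      = fderiv ℝ u (y ∘ Sum.inr) (v ∘ Sum.inr) :=
  mp_fderiv_pull (mpProjR ι κ) (mpInR ι κ) (fun _ => rfl) u y v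

lemma mp_sll (i : ι) : (Pi.single (Sum.inl i) 1 : ι ⊕ κ → ℝ) ∘ Sum.inl = Pi.single i 1 := by
  ext j; simp [Pi.single_apply]
lemma mp_slr (i : ι) : (Pi.single (Sum.inl i) 1 : ι ⊕ κ → ℝ) ∘ Sum.inr = 0 := by
  ext j; simp [Pi.single_apply]
lemma mp_srr (i : κ) : (Pi.single (Sum.inr i) 1 : ι ⊕ κ → ℝ) ∘ Sum.inr = Pi.single i 1 := by
  ext j; simp [Pi.single_apply]
lemma mp_srl (i : κ) : (Pi.single (Sum.inr i) 1 : ι ⊕ κ → ℝ) ∘ Sum.inl = 0 := by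
  ext j; simp [Pi.single_apply]

lemma pdy_pullL_l (g : (ι → ℝ) → (ι → ℝ) → ℝ) (i : ι) :
    pdy (pullL κ g) (Sum.inl i) = pullL κ (pdy g i) := by
  ext x y
  exact (mp_fdL (g (x ∘ Sum.inl)) y _).trans (by rw [mp_sll]; rfl)
lemma pdy_pullL_r (g : (ι → ℝ) → (ι → ℝ) → ℝ) (i : κ) :
    pdy (pullL κ g) (Sum.inr i) = fun _ _ => 0 := by
  ext x y
  exact (mp_fdL (g (x ∘ Sum.inl)) y _).trans (by rw [mp_srl]; simp)
lemma pdy_pullR_r (g : (κ → ℝ) → (κ → ℝ) → ℝ) (i : κ) :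
    pdy (pullR ι g) (Sum.inr i) = pullR ι (pdy g i) := by
  ext x y
  exact (mp_fdR (g (x ∘ Sum.inr)) y _).trans (by rw [mp_srr]; rfl)
lemma pdy_pullR_l (g : (κ → ℝ) → (κ → ℝ) → ℝ) (i : ι) :
    pdy (pullR ι g) (Sum.inl i) = fun _ _ => 0 := by
  ext x y
  exact (mp_fdR (g (x ∘ Sum.inr)) y _).trans (by rw [mp_slr]; simp)
lemma pdx_pullL_l (g : (ι → ℝ) → (ι → ℝ) → ℝ) (i : ι) :
    pdx (pullL κ g) (Sum.inl i) = pullL κ (pdx g i) := by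
  ext x y
  exact (mp_fdL (fun x' => g x' (y ∘ Sum.inl)) x _).trans (by rw [mp_sll]; rfl)
lemma pdx_pullL_r (g : (ι → ℝ) → (ι → ℝ) → ℝ) (i : κ) :
    pdx (pullL κ g) (Sum.inr i) = fun _ _ => 0 := by
  ext x y
  exact (mp_fdL (fun x' => g x' (y ∘ Sum.inl)) x _).trans (by rw [mp_srl]; simp)
lemma pdx_pullR_r (g : (κ → ℝ) → (κ → ℝ) → ℝ) (i : κ) :
    pdx (pullR ι g) (Sum.inr i) = pullR ι (pdx g i) := by
  ext x y
  exact (mp_fdR (fun x' => g x' (y ∘ Sum.inr)) x _).trans (by rw [mp_srr]; rfl)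
lemma pdx_pullR_l (g : (κ → ℝ) → (κ → ℝ) → ℝ) (i : ι) :
    pdx (pullR ι g) (Sum.inl i) = fun _ _ => 0 := by
  ext x y
  exact (mp_fdR (fun x' => g x' (y ∘ Sum.inr)) x _).trans (by rw [mp_slr]; simp)
lemma pdy_zero' (i : ι) : pdy (fun _ _ => (0 : ℝ)) i = fun _ _ => 0 := by
  ext x y; simp [pdy]
lemma pdx_zero' (i : ι) : pdx (fun _ _ => (0 : ℝ)) i = fun _ _ => 0 := by
  ext x y; simp [pdx]
end pull

section smooth
variable {ι : Type*} [Fintype ι] [DecidableEq ι]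

lemma mp_diffy {g : (ι → ℝ) → (ι → ℝ) → ℝ} {x y : ι → ℝ}
    (h : DifferentiableAt ℝ (fun p : (ι → ℝ) × (ι → ℝ) => g p.1 p.2) (x, y)) :
    DifferentiableAt ℝ (g x) y :=
  DifferentiableAt.comp (f := fun y' => (x, y')) y h (by fun_prop)
lemma mp_diffx {g : (ι → ℝ) → (ι → ℝ) → ℝ} {x y : ι → ℝ}
    (h : DifferentiableAt ℝ (fun p : (ι → ℝ) × (ι → ℝ) => g p.1 p.2) (x, y)) :
    DifferentiableAt ℝ (fun x' => g x' y) x :=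
  DifferentiableAt.comp (f := fun x' => (x', y)) x h (by fun_prop)

lemma mp_smooth_pdy {g : (ι → ℝ) → (ι → ℝ) → ℝ} {W : Set ((ι → ℝ) × (ι → ℝ))} (hW : IsOpen W)
    (h : ContDiffOn ℝ (⊤ : ℕ∞) (fun p : (ι → ℝ) × (ι → ℝ) => g p.1 p.2) W) (α : ι) :
    ContDiffOn ℝ (⊤ : ℕ∞) (fun p : (ι → ℝ) × (ι → ℝ) => pdy g α p.1 p.2) W := by
  have h1 : ContDiffOn ℝ (⊤ : ℕ∞)
      (fun p => fderiv ℝ (fun p : (ι → ℝ) × (ι → ℝ) => g p.1 p.2) p) W :=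
    h.fderiv_of_isOpen hW (by simp)
  have h2 : ContDiffOn ℝ (⊤ : ℕ∞)
      (fun p => fderiv ℝ (fun p : (ι → ℝ) × (ι → ℝ) => g p.1 p.2) p (0, Pi.single α 1)) W :=
    h1.clm_apply contDiffOn_const
  refine h2.congr fun p hp => ?_
  have hd : DifferentiableAt ℝ (fun p : (ι → ℝ) × (ι → ℝ) => g p.1 p.2) p :=
    (h.contDiffAt (hW.mem_nhds hp)).differentiableAt (by simp)
  have h3 : HasFDerivAt (fun y' : ι → ℝ => (p.1, y'))
      (ContinuousLinearMap.inr ℝ (ι → ℝ) (ι → ℝ)) p.2 := hasFDerivAt_prodMk_right p.1 p.2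
  have h4 : HasFDerivAt (g p.1) _ p.2 :=
    HasFDerivAt.comp (f := fun y' => (p.1, y')) p.2 hd.hasFDerivAt h3
  simp only [pdy]
  rw [h4.fderiv]
  simp
end smooth

section finsler
variable {ι : Type*} [Fintype ι] [DecidableEq ι] {U : Set (ι → ℝ)} {F : (ι → ℝ) → (ι → ℝ) → ℝ}

lemma IsFinslerMetric.openW (hF : IsFinslerMetric U F) :
    IsOpen (U ×ˢ {y : ι → ℝ | y ≠ 0}) := hF.isOpen.prod isOpen_ne

lemma IsFinslerMetric.diff0 (hF : IsFinslerMetric U F) {x y : ι → ℝ} (hx : x ∈ U) (hy : y ≠ 0) :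
    DifferentiableAt ℝ (fun p : (ι → ℝ) × (ι → ℝ) => (F p.1 p.2) ^ 2) (x, y) :=
  (hF.smooth.contDiffAt (hF.openW.mem_nhds (Set.mk_mem_prod hx hy))).differentiableAt (by simp)

lemma IsFinslerMetric.diff1 (hF : IsFinslerMetric U F) {x y : ι → ℝ} (hx : x ∈ U) (hy : y ≠ 0)
    (α : ι) :
    DifferentiableAt ℝ (fun p : (ι → ℝ) × (ι → ℝ) =>
      pdy (fun x' y' => (F x' y') ^ 2) α p.1 p.2) (x, y) :=
  ((mp_smooth_pdy (g := fun x' y' => (F x' y') ^ 2) hF.openW hF.smooth α).contDiffAt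
    (hF.openW.mem_nhds (Set.mk_mem_prod hx hy))).differentiableAt (by simp)

lemma IsFinslerMetric.hom2 (hF : IsFinslerMetric U F) {x : ι → ℝ} (hx : x ∈ U) (z : ι → ℝ)
    (c : ℝ) : (F x (c • z)) ^ 2 = c ^ 2 * (F x z) ^ 2 := by
  rw [hF.homog x hx, mul_pow, sq_abs]

lemma IsFinslerMetric.euler0 (hF : IsFinslerMetric U F) {x y : ι → ℝ} (hx : x ∈ U) (hy : y ≠ 0) :
    ∑ α, y α * pdy (fun x' y' => (F x' y') ^ 2) α x y = 2 * (F x y) ^ 2 := by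
  simp only [pdy]
  rw [mp_sum_single, mp_euler (fun y => F x y ^ 2) y 2 (mp_diffy (g := fun x y => F x y ^ 2) (hF.diff0 hx hy))
    (fun c _ => hF.hom2 hx y c)]
  norm_num

lemma IsFinslerMetric.euler1 (hF : IsFinslerMetric U F) {x y : ι → ℝ} (hx : x ∈ U) (hy : y ≠ 0)
    (α : ι) :
    ∑ ν, y ν * fundTensor F x y ν α = pdy (fun x' y' => (F x' y') ^ 2) α x y := by
  simp only [fundTensor]
  rw [show ∑ ν, y ν * pdy (pdy (fun x' y' => (F x' y') ^ 2) α) ν x y =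
    ∑ ν, y ν * fderiv ℝ (pdy (fun x' y' => (F x' y') ^ 2) α x) y (Pi.single ν 1) from rfl]
  rw [mp_sum_single, mp_euler (pdy (fun x' y' => (F x' y') ^ 2) α x) y 1
    (mp_diffy (g := pdy (fun x' y' => (F x' y') ^ 2) α) (hF.diff1 hx hy α))]
  · norm_num
  · intro c hc
    exact mp_fderiv_smul (fun y => F x y ^ 2) y _ (fun z c _ => hF.hom2 hx z c) c hc
      (mp_diffy (g := fun x y => F x y ^ 2) (hF.diff0 hx (smul_ne_zero hc.ne' hy))) (mp_diffy (g := fun x y => F x y ^ 2) (hF.diff0 hx hy))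

/-- the right-hand side in the spray equation -/
noncomputable def mpB (F : (ι → ℝ) → (ι → ℝ) → ℝ) (β : ι) (x y : ι → ℝ) : ℝ :=
  (∑ γ, pdx (pdy (fun x' y' => (F x' y') ^ 2) β) γ x y * y γ) -
      pdx (fun x' y' => (F x' y') ^ 2) β x y

lemma IsFinslerMetric.spray_eq (hF : IsFinslerMetric U F) {x y : ι → ℝ} (hx : x ∈ U) (hy : y ≠ 0)
    (β : ι) :
    2 * ∑ α, fundTensor F x y β α * spray F α x y = mpB F β x y := by
  have hdet : IsUnit (fundTensor F x y).det := (hF.posDef x hx y hy).det_pos.ne'.isUnit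
  have hs : (fun α => spray F α x y) =
      (1 / 2 : ℝ) • ((fundTensor F x y)⁻¹ *ᵥ fun β => mpB F β x y) := by
    ext α; rfl
  have : ∑ α, fundTensor F x y β α * spray F α x y =
      ((fundTensor F x y) *ᵥ fun α => spray F α x y) β := rfl
  rw [this, hs, Matrix.mulVec_smul, Matrix.mulVec_mulVec, Matrix.mul_nonsing_inv _ hdet]
  simp

lemma IsFinslerMetric.spray_unique (hF : IsFinslerMetric U F) {x y : ι → ℝ} (hx : x ∈ U)
    (hy : y ≠ 0) (Q : ι → ℝ)
    (h : ∀ β, 2 * ∑ α, fundTensor F x y β α * Q α = mpB F β x y) (α : ι) :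
    spray F α x y = Q α := by
  have hdet : IsUnit (fundTensor F x y).det := (hF.posDef x hx y hy).det_pos.ne'.isUnit
  have h1 : (fundTensor F x y) *ᵥ (fun α => spray F α x y) = (fundTensor F x y) *ᵥ Q := by
    ext β
    have := hF.spray_eq hx hy β
    rw [← h β] at this
    exact mul_left_cancel₀ two_ne_zero this
  have h2 := congrArg (fun v => (fundTensor F x y)⁻¹ *ᵥ v) h1
  simp only [Matrix.mulVec_mulVec, Matrix.nonsing_inv_mul _ hdet, Matrix.one_mulVec] at h2
  exact congrFun h2 α

lemma IsFinslerMetric.spray_contr (hF : IsFinslerMetric U F) {x y : ι → ℝ} (hx : x ∈ U)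
    (hy : y ≠ 0) :
    2 * ∑ α, pdy (fun x' y' => (F x' y') ^ 2) α x y * spray F α x y =
      ∑ γ, pdx (fun x' y' => (F x' y') ^ 2) γ x y * y γ := by
  have h1 : 2 * ∑ α, pdy (fun x' y' => (F x' y') ^ 2) α x y * spray F α x y =
      ∑ β, y β * mpB F β x y := by
    simp only [← hF.spray_eq hx hy, ← hF.euler1 hx hy, Finset.mul_sum, Finset.sum_mul]
    rw [Finset.sum_comm]
    refine Finset.sum_congr rfl fun _ _ => Finset.sum_congr rfl fun _ _ => by ring
  have h2 : ∀ γ, ∑ β, y β * pdx (pdy (fun x' y' => (F x' y') ^ 2) β) γ x y =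
      2 * pdx (fun x' y' => (F x' y') ^ 2) γ x y := by
    intro γ
    have hd : ∀ β, DifferentiableAt ℝ (fun x' => pdy (fun x' y' => (F x' y') ^ 2) β x' y) x :=
      fun β => mp_diffx (g := pdy (fun x' y' => (F x' y') ^ 2) β) (hF.diff1 hx hy β)
    have e1 : HasFDerivAt (fun x' => ∑ β, y β * pdy (fun x' y' => (F x' y') ^ 2) β x' y)
        (∑ β, y β • fderiv ℝ (fun x' => pdy (fun x' y' => (F x' y') ^ 2) β x' y) x) x :=
      HasFDerivAt.fun_sum fun β _ => (hd β).hasFDerivAt.const_mul (y β)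
    have e2 : HasFDerivAt (fun x' => 2 * (F x' y) ^ 2)
        ((2 : ℝ) • fderiv ℝ (fun x' => (F x' y) ^ 2) x) x :=
      (mp_diffx (g := fun x' y' => (F x' y') ^ 2) (hF.diff0 hx hy)).hasFDerivAt.const_mul 2
    have e3 : (fun x' => ∑ β, y β * pdy (fun x' y' => (F x' y') ^ 2) β x' y) =ᶠ[nhds x]
        (fun x' => 2 * (F x' y) ^ 2) := by
      filter_upwards [hF.isOpen.mem_nhds hx] with x' hx'
      exact hF.euler0 hx' hy
    have e4 := congrArg (fun L : (ι → ℝ) →L[ℝ] ℝ => L (Pi.single γ 1))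
      (e1.unique (e2.congr_of_eventuallyEq e3))
    simpa [pdx] using e4
  rw [h1]
  simp only [mpB, mul_sub, Finset.sum_sub_distrib, Finset.mul_sum]
  rw [Finset.sum_comm, sub_eq_iff_eq_add, ← Finset.sum_add_distrib]
  refine Finset.sum_congr rfl fun γ _ => ?_
  have := h2 γ
  calc _ = (∑ β, y β * pdx (pdy (fun x' y' => (F x' y') ^ 2) β) γ x y) * y γ := by
        rw [Finset.sum_mul]; exact Finset.sum_congr rfl fun _ _ => by ring
    _ = _ := by rw [this]; ring
end finsler

section prod

lemma mp_chain {E : Type*} [NormedAddCommGroup E] [NormedSpace ℝ E] {A : ℝ × ℝ → ℝ} {k h : E → ℝ}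
    {y : E} (hA : DifferentiableAt ℝ A (k y, h y)) (hk : DifferentiableAt ℝ k y)
    (hh : DifferentiableAt ℝ h y) (v : E) :
    fderiv ℝ (fun y => A (k y, h y)) y v =
      fderiv ℝ A (k y, h y) (1, 0) * fderiv ℝ k y v
        + fderiv ℝ A (k y, h y) (0, 1) * fderiv ℝ h y v := by
  have h1 : HasFDerivAt (fun y => A (k y, h y)) _ y :=
    HasFDerivAt.comp (f := fun y => (k y, h y)) y hA.hasFDerivAt
      (hk.hasFDerivAt.prodMk hh.hasFDerivAt)
  rw [h1.fderiv]
  have h2 : ((fderiv ℝ k y v, fderiv ℝ h y v) : ℝ × ℝ) =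
      (fderiv ℝ k y v) • ((1, 0) : ℝ × ℝ) + (fderiv ℝ h y v) • ((0, 1) : ℝ × ℝ) := by
    ext <;> simp
  simp only [ContinuousLinearMap.comp_apply, ContinuousLinearMap.prod_apply]
  rw [h2, map_add, map_smul, map_smul, smul_eq_mul, smul_eq_mul]
  ring

lemma mp_chain2 {E : Type*} [NormedAddCommGroup E] [NormedSpace ℝ E] {A B : ℝ × ℝ → ℝ}
    {k h p q : E → ℝ}
    {y : E} (hA : DifferentiableAt ℝ A (k y, h y)) (hB : DifferentiableAt ℝ B (k y, h y))
    (hk : DifferentiableAt ℝ k y) (hh : DifferentiableAt ℝ h y)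
    (hp : DifferentiableAt ℝ p y) (hq : DifferentiableAt ℝ q y) (v : E) :
    fderiv ℝ (fun y => A (k y, h y) * p y + B (k y, h y) * q y) y v =
      (fderiv ℝ A (k y, h y) (1, 0) * fderiv ℝ k y v
        + fderiv ℝ A (k y, h y) (0, 1) * fderiv ℝ h y v) * p y + A (k y, h y) * fderiv ℝ p y v
      + ((fderiv ℝ B (k y, h y) (1, 0) * fderiv ℝ k y v
        + fderiv ℝ B (k y, h y) (0, 1) * fderiv ℝ h y v) * q y
        + B (k y, h y) * fderiv ℝ q y v) := by
  have hA' : DifferentiableAt ℝ (fun y => A (k y, h y)) y :=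
    DifferentiableAt.comp (f := fun y => (k y, h y)) y hA (hk.prodMk hh)
  have hB' : DifferentiableAt ℝ (fun y => B (k y, h y)) y :=
    DifferentiableAt.comp (f := fun y => (k y, h y)) y hB (hk.prodMk hh)
  have h1 := (hA'.hasFDerivAt.mul hp.hasFDerivAt).add (hB'.hasFDerivAt.mul hq.hasFDerivAt)
  have h2 : HasFDerivAt (fun y => A (k y, h y) * p y + B (k y, h y) * q y) _ y := h1
  rw [h2.fderiv, ← mp_chain hA hk hh, ← mp_chain hB hk hh]
  simp only [_root_.add_apply, _root_.smul_apply, smul_eq_mul]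
  ring

lemma mp_pullL_diff {ι κ : Type*} [Fintype ι] [Fintype κ] {g : (ι → ℝ) → (ι → ℝ) → ℝ}
    {x y : ι ⊕ κ → ℝ}
    (h : DifferentiableAt ℝ (fun p : (ι → ℝ) × (ι → ℝ) => g p.1 p.2)
      (x ∘ Sum.inl, y ∘ Sum.inl)) :
    DifferentiableAt ℝ (fun p : (ι ⊕ κ → ℝ) × (ι ⊕ κ → ℝ) => pullL κ g p.1 p.2) (x, y) :=
  DifferentiableAt.comp (f := fun p : (ι ⊕ κ → ℝ) × (ι ⊕ κ → ℝ) =>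
    (mpProjL ι κ p.1, mpProjL ι κ p.2)) (x, y) h (by fun_prop)

lemma mp_pullR_diff {ι κ : Type*} [Fintype ι] [Fintype κ] {g : (κ → ℝ) → (κ → ℝ) → ℝ}
    {x y : ι ⊕ κ → ℝ}
    (h : DifferentiableAt ℝ (fun p : (κ → ℝ) × (κ → ℝ) => g p.1 p.2)
      (x ∘ Sum.inr, y ∘ Sum.inr)) :
    DifferentiableAt ℝ (fun p : (ι ⊕ κ → ℝ) × (ι ⊕ κ → ℝ) => pullR ι g p.1 p.2) (x, y) :=
  DifferentiableAt.comp (f := fun p : (ι ⊕ κ → ℝ) × (ι ⊕ κ → ℝ) =>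
    (mpProjR ι κ p.1, mpProjR ι κ p.2)) (x, y) h (by fun_prop)

variable {m n : ℕ} {U₁ : Set (Fin m → ℝ)} {U₂ : Set (Fin n → ℝ)}
    {F₁ : (Fin m → ℝ) → (Fin m → ℝ) → ℝ} {F₂ : (Fin n → ℝ) → (Fin n → ℝ) → ℝ}
    {f : ℝ → ℝ → ℝ} {F : (Fin m ⊕ Fin n → ℝ) → (Fin m ⊕ Fin n → ℝ) → ℝ}

/-- good points -/
def mpV (U₁ : Set (Fin m → ℝ)) (U₂ : Set (Fin n → ℝ)) (x y : Fin m ⊕ Fin n → ℝ) : Prop :=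
  ((x ∘ Sum.inl) ∈ U₁ ∧ (x ∘ Sum.inr) ∈ U₂) ∧ ((y ∘ Sum.inl) ≠ 0 ∧ (y ∘ Sum.inr) ≠ 0)

lemma mpV_y {x y : Fin m ⊕ Fin n → ℝ} (h : mpV U₁ U₂ x y) : ∀ᶠ y' in nhds y, mpV U₁ U₂ x y' := by
  have h1 : ∀ᶠ y' in nhds y, mpProjL (Fin m) (Fin n) y' ≠ 0 :=
    (mpProjL (Fin m) (Fin n)).continuous.continuousAt.eventually_ne h.2.1
  have h2 : ∀ᶠ y' in nhds y, mpProjR (Fin m) (Fin n) y' ≠ 0 :=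
    (mpProjR (Fin m) (Fin n)).continuous.continuousAt.eventually_ne h.2.2
  filter_upwards [h1, h2] with y' a b
  exact ⟨h.1, a, b⟩

lemma mpV_x (hU₁ : IsOpen U₁) (hU₂ : IsOpen U₂) {x y : Fin m ⊕ Fin n → ℝ} (h : mpV U₁ U₂ x y) :
    ∀ᶠ x' in nhds x, mpV U₁ U₂ x' y := by
  have h1 : ∀ᶠ x' in nhds x, mpProjL (Fin m) (Fin n) x' ∈ U₁ :=
    (mpProjL (Fin m) (Fin n)).continuous.continuousAt.eventually (hU₁.mem_nhds h.1.1)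
  have h2 : ∀ᶠ x' in nhds x, mpProjR (Fin m) (Fin n) x' ∈ U₂ :=
    (mpProjR (Fin m) (Fin n)).continuous.continuousAt.eventually (hU₂.mem_nhds h.1.2)
  filter_upwards [h1, h2] with y' a b
  exact ⟨⟨a, b⟩, h.2⟩

lemma mpV_ne {x y : Fin m ⊕ Fin n → ℝ} (h : mpV U₁ U₂ x y) : y ≠ 0 := by
  rintro rfl
  exact h.2.1 rfl

/-- pulled back energy functions -/
def mpK (n : ℕ) (F₁ : (Fin m → ℝ) → (Fin m → ℝ) → ℝ) :
    (Fin m ⊕ Fin n → ℝ) → (Fin m ⊕ Fin n → ℝ) → ℝ := pullL (Fin n) fun x y => F₁ x y ^ 2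
def mpH (m : ℕ) (F₂ : (Fin n → ℝ) → (Fin n → ℝ) → ℝ) :
    (Fin m ⊕ Fin n → ℝ) → (Fin m ⊕ Fin n → ℝ) → ℝ := pullR (Fin m) fun x y => F₂ x y ^ 2

/-- the product function on pairs and its partial derivatives -/
def mpφ (f : ℝ → ℝ → ℝ) : ℝ × ℝ → ℝ := fun p => f p.1 p.2
noncomputable def mpφ1 (f : ℝ → ℝ → ℝ) : ℝ × ℝ → ℝ := fun p => fderiv ℝ (mpφ f) p (1, 0)
noncomputable def mpφ2 (f : ℝ → ℝ → ℝ) : ℝ × ℝ → ℝ := fun p => fderiv ℝ (mpφ f) p (0, 1)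


lemma mp_G (hp : IsMinkowskianProduct U₁ U₂ F₁ F₂ f F)
    : (fun x y => F x y ^ 2) = fun x y => mpφ f (mpK n F₁ x y, mpH m F₂ x y) := by
  ext x y
  rw [hp.F_def, Real.sq_sqrt]
  · rfl
  · exact hp.f_nonneg _ (Set.mem_Ici.2 (sq_nonneg _)) _ (Set.mem_Ici.2 (sq_nonneg _))

lemma mp_pos (hp : IsMinkowskianProduct U₁ U₂ F₁ F₂ f F)
    {x y : Fin m ⊕ Fin n → ℝ} (h : mpV U₁ U₂ x y) :
    (mpK n F₁ x y, mpH m F₂ x y) ∈ Set.Ioi (0 : ℝ) ×ˢ Set.Ioi (0 : ℝ) :=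
  Set.mk_mem_prod (pow_pos (hp.finsler₁.pos _ h.1.1 _ h.2.1) 2)
    (pow_pos (hp.finsler₂.pos _ h.1.2 _ h.2.2) 2)

lemma mp_φ_smooth (hp : IsMinkowskianProduct U₁ U₂ F₁ F₂ f F)
    {q : ℝ × ℝ} (hq : q ∈ Set.Ioi (0 : ℝ) ×ˢ Set.Ioi (0 : ℝ)) :
    ContDiffAt ℝ (⊤ : ℕ∞) (mpφ f) q :=
  hp.f_smooth.contDiffAt ((isOpen_Ioi.prod isOpen_Ioi).mem_nhds hq)

lemma mp_φ_d (hp : IsMinkowskianProduct U₁ U₂ F₁ F₂ f F)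
    {q : ℝ × ℝ} (hq : q ∈ Set.Ioi (0 : ℝ) ×ˢ Set.Ioi (0 : ℝ)) :
    DifferentiableAt ℝ (mpφ f) q := (mp_φ_smooth hp hq).differentiableAt (by simp)

lemma mp_φ_dd (hp : IsMinkowskianProduct U₁ U₂ F₁ F₂ f F)
    {q : ℝ × ℝ} (hq : q ∈ Set.Ioi (0 : ℝ) ×ˢ Set.Ioi (0 : ℝ)) :
    DifferentiableAt ℝ (fderiv ℝ (mpφ f)) q := by
  have h : ContDiffAt ℝ 1 (fderiv ℝ (mpφ f)) q :=
    (mp_φ_smooth hp hq).fderiv_right (m := 1) (by norm_cast)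
  exact h.differentiableAt (by simp)

lemma mp_φ1_d (hp : IsMinkowskianProduct U₁ U₂ F₁ F₂ f F)
    {q : ℝ × ℝ} (hq : q ∈ Set.Ioi (0 : ℝ) ×ˢ Set.Ioi (0 : ℝ)) :
    DifferentiableAt ℝ (mpφ1 f) q :=
  (mp_φ_dd hp hq).clm_apply (differentiableAt_const _)
lemma mp_φ2_d (hp : IsMinkowskianProduct U₁ U₂ F₁ F₂ f F)
    {q : ℝ × ℝ} (hq : q ∈ Set.Ioi (0 : ℝ) ×ˢ Set.Ioi (0 : ℝ)) :
    DifferentiableAt ℝ (mpφ2 f) q :=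
  (mp_φ_dd hp hq).clm_apply (differentiableAt_const _)

lemma mp_symm (hp : IsMinkowskianProduct U₁ U₂ F₁ F₂ f F)
    {q : ℝ × ℝ} (hq : q ∈ Set.Ioi (0 : ℝ) ×ˢ Set.Ioi (0 : ℝ)) :
    fderiv ℝ (mpφ1 f) q (0, 1) = fderiv ℝ (mpφ2 f) q (1, 0) := by
  have key : ∀ v w : ℝ × ℝ, fderiv ℝ (fun p => fderiv ℝ (mpφ f) p v) q w
      = fderiv ℝ (fderiv ℝ (mpφ f)) q w v := by
    intro v w
    have h1 := (mp_φ_dd hp hq).hasFDerivAt.clm_apply (hasFDerivAt_const v q)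
    rw [h1.fderiv]
    simp
  have hs : IsSymmSndFDerivAt ℝ (mpφ f) q :=
    (mp_φ_smooth hp hq).isSymmSndFDerivAt (by simp only [minSmoothness_of_isRCLikeNormedField]; norm_cast)
  unfold mpφ1 mpφ2
  rw [key, key]
  exact hs.eq _ _

lemma mp_pS (hp : IsMinkowskianProduct U₁ U₂ F₁ F₂ f F)
    {s t : ℝ} (hs : 0 < s) (ht : 0 < t) : pderivS f s t = mpφ1 f (s, t) := by
  have h1 := (mp_φ_d hp (q := (s, t)) (Set.mk_mem_prod hs ht)).hasFDerivAt
  have h2 : HasDerivAt (fun u : ℝ => (u, t)) (1, 0) s :=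
    (hasDerivAt_id s).prodMk (hasDerivAt_const s t)
  exact (h1.comp_hasDerivAt (f := fun u => (u, t)) s h2).deriv
lemma mp_pT (hp : IsMinkowskianProduct U₁ U₂ F₁ F₂ f F)
    {s t : ℝ} (hs : 0 < s) (ht : 0 < t) : pderivT f s t = mpφ2 f (s, t) := by
  have h1 := (mp_φ_d hp (q := (s, t)) (Set.mk_mem_prod hs ht)).hasFDerivAt
  have h2 : HasDerivAt (fun u : ℝ => (s, u)) (0, 1) t :=
    (hasDerivAt_const t s).prodMk (hasDerivAt_id t)
  exact (h1.comp_hasDerivAt (f := fun u => (s, u)) t h2).deriv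

lemma mp_K0 (hp : IsMinkowskianProduct U₁ U₂ F₁ F₂ f F)
    {x y : Fin m ⊕ Fin n → ℝ} (h : mpV U₁ U₂ x y) :
    DifferentiableAt ℝ (fun p : (Fin m ⊕ Fin n → ℝ) × (Fin m ⊕ Fin n → ℝ) =>
      mpK n F₁ p.1 p.2) (x, y) :=
  mp_pullL_diff (g := fun x y => F₁ x y ^ 2) (hp.finsler₁.diff0 h.1.1 h.2.1)
lemma mp_H0 (hp : IsMinkowskianProduct U₁ U₂ F₁ F₂ f F)
    {x y : Fin m ⊕ Fin n → ℝ} (h : mpV U₁ U₂ x y) :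
    DifferentiableAt ℝ (fun p : (Fin m ⊕ Fin n → ℝ) × (Fin m ⊕ Fin n → ℝ) =>
      mpH m F₂ p.1 p.2) (x, y) :=
  mp_pullR_diff (g := fun x y => F₂ x y ^ 2) (hp.finsler₂.diff0 h.1.2 h.2.2)
lemma mp_K1 (hp : IsMinkowskianProduct U₁ U₂ F₁ F₂ f F)
    {x y : Fin m ⊕ Fin n → ℝ} (h : mpV U₁ U₂ x y) (β : Fin m ⊕ Fin n) :
    DifferentiableAt ℝ (fun p : (Fin m ⊕ Fin n → ℝ) × (Fin m ⊕ Fin n → ℝ) =>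
      pdy (mpK n F₁) β p.1 p.2) (x, y) := by
  unfold mpK
  rcases β with i | i
  · rw [pdy_pullL_l]
    exact mp_pullL_diff (hp.finsler₁.diff1 h.1.1 h.2.1 i)
  · rw [pdy_pullL_r]
    exact differentiableAt_const _
lemma mp_H1 (hp : IsMinkowskianProduct U₁ U₂ F₁ F₂ f F)
    {x y : Fin m ⊕ Fin n → ℝ} (h : mpV U₁ U₂ x y) (β : Fin m ⊕ Fin n) :
    DifferentiableAt ℝ (fun p : (Fin m ⊕ Fin n → ℝ) × (Fin m ⊕ Fin n → ℝ) =>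
      pdy (mpH m F₂) β p.1 p.2) (x, y) := by
  unfold mpH
  rcases β with i | i
  · rw [pdy_pullR_l]
    exact differentiableAt_const _
  · rw [pdy_pullR_r]
    exact mp_pullR_diff (hp.finsler₂.diff1 h.1.2 h.2.2 i)

lemma mp_Gy (hp : IsMinkowskianProduct U₁ U₂ F₁ F₂ f F)
    {x y : Fin m ⊕ Fin n → ℝ} (h : mpV U₁ U₂ x y) (β : Fin m ⊕ Fin n) :
    pdy (fun x y => F x y ^ 2) β x y =
      mpφ1 f (mpK n F₁ x y, mpH m F₂ x y) * pdy (mpK n F₁) β x y +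
      mpφ2 f (mpK n F₁ x y, mpH m F₂ x y) * pdy (mpH m F₂) β x y := by
  rw [mp_G hp]
  exact mp_chain (mp_φ_d hp (mp_pos hp h)) (mp_diffy (mp_K0 hp h)) (mp_diffy (mp_H0 hp h)) _

lemma mp_Gx (hp : IsMinkowskianProduct U₁ U₂ F₁ F₂ f F)
    {x y : Fin m ⊕ Fin n → ℝ} (h : mpV U₁ U₂ x y) (β : Fin m ⊕ Fin n) :
    pdx (fun x y => F x y ^ 2) β x y =
      mpφ1 f (mpK n F₁ x y, mpH m F₂ x y) * pdx (mpK n F₁) β x y +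
      mpφ2 f (mpK n F₁ x y, mpH m F₂ x y) * pdx (mpH m F₂) β x y := by
  rw [mp_G hp]
  exact mp_chain (k := fun x' => mpK n F₁ x' y) (h := fun x' => mpH m F₂ x' y)
    (mp_φ_d hp (mp_pos hp h)) (mp_diffx (mp_K0 hp h)) (mp_diffx (mp_H0 hp h)) _

lemma mp_Gyy (hp : IsMinkowskianProduct U₁ U₂ F₁ F₂ f F)
    {x y : Fin m ⊕ Fin n → ℝ} (h : mpV U₁ U₂ x y) (α β : Fin m ⊕ Fin n) :
    fundTensor F x y α β =
      (fderiv ℝ (mpφ1 f) (mpK n F₁ x y, mpH m F₂ x y) (1, 0) * pdy (mpK n F₁) α x y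
      + fderiv ℝ (mpφ1 f) (mpK n F₁ x y, mpH m F₂ x y) (0, 1) * pdy (mpH m F₂) α x y)
        * pdy (mpK n F₁) β x y
      + mpφ1 f (mpK n F₁ x y, mpH m F₂ x y) * pdy (pdy (mpK n F₁) β) α x y
      + ((fderiv ℝ (mpφ2 f) (mpK n F₁ x y, mpH m F₂ x y) (1, 0) * pdy (mpK n F₁) α x y
      + fderiv ℝ (mpφ2 f) (mpK n F₁ x y, mpH m F₂ x y) (0, 1) * pdy (mpH m F₂) α x y)
        * pdy (mpH m F₂) β x y
      + mpφ2 f (mpK n F₁ x y, mpH m F₂ x y) * pdy (pdy (mpH m F₂) β) α x y) := by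
  have e : (pdy (fun x y => F x y ^ 2) β x) =ᶠ[nhds y] fun y =>
      mpφ1 f (mpK n F₁ x y, mpH m F₂ x y) * pdy (mpK n F₁) β x y +
      mpφ2 f (mpK n F₁ x y, mpH m F₂ x y) * pdy (mpH m F₂) β x y := by
    filter_upwards [mpV_y h] with y' hy'
    exact mp_Gy hp hy' β
  show fderiv ℝ (pdy (fun x y => F x y ^ 2) β x) y (Pi.single α 1) = _
  rw [e.fderiv_eq]
  exact mp_chain2 (mp_φ1_d hp (mp_pos hp h)) (mp_φ2_d hp (mp_pos hp h))
    (mp_diffy (mp_K0 hp h)) (mp_diffy (mp_H0 hp h))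
    (mp_diffy (mp_K1 hp h β)) (mp_diffy (mp_H1 hp h β)) _

lemma mp_Gyx (hp : IsMinkowskianProduct U₁ U₂ F₁ F₂ f F)
    {x y : Fin m ⊕ Fin n → ℝ} (h : mpV U₁ U₂ x y) (γ β : Fin m ⊕ Fin n) :
    pdx (pdy (fun x y => F x y ^ 2) β) γ x y =
      (fderiv ℝ (mpφ1 f) (mpK n F₁ x y, mpH m F₂ x y) (1, 0) * pdx (mpK n F₁) γ x y
      + fderiv ℝ (mpφ1 f) (mpK n F₁ x y, mpH m F₂ x y) (0, 1) * pdx (mpH m F₂) γ x y)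
        * pdy (mpK n F₁) β x y
      + mpφ1 f (mpK n F₁ x y, mpH m F₂ x y) * pdx (pdy (mpK n F₁) β) γ x y
      + ((fderiv ℝ (mpφ2 f) (mpK n F₁ x y, mpH m F₂ x y) (1, 0) * pdx (mpK n F₁) γ x y
      + fderiv ℝ (mpφ2 f) (mpK n F₁ x y, mpH m F₂ x y) (0, 1) * pdx (mpH m F₂) γ x y)
        * pdy (mpH m F₂) β x y
      + mpφ2 f (mpK n F₁ x y, mpH m F₂ x y) * pdx (pdy (mpH m F₂) β) γ x y) := by
  have e : (fun x => pdy (fun x y => F x y ^ 2) β x y) =ᶠ[nhds x] fun x =>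
      mpφ1 f (mpK n F₁ x y, mpH m F₂ x y) * pdy (mpK n F₁) β x y +
      mpφ2 f (mpK n F₁ x y, mpH m F₂ x y) * pdy (mpH m F₂) β x y := by
    filter_upwards [mpV_x hp.finsler₁.isOpen hp.finsler₂.isOpen h] with x' hx'
    exact mp_Gy hp hx' β
  show fderiv ℝ (fun x => pdy (fun x y => F x y ^ 2) β x y) x (Pi.single γ 1) = _
  rw [e.fderiv_eq]
  exact mp_chain2 (k := fun x' => mpK n F₁ x' y) (h := fun x' => mpH m F₂ x' y)
    (p := fun x' => pdy (mpK n F₁) β x' y) (q := fun x' => pdy (mpH m F₂) β x' y)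
    (mp_φ1_d hp (mp_pos hp h)) (mp_φ2_d hp (mp_pos hp h))
    (mp_diffx (mp_K0 hp h)) (mp_diffx (mp_H0 hp h))
    (mp_diffx (mp_K1 hp h β)) (mp_diffx (mp_H1 hp h β)) _

/-- the spray of the product, blockwise -/
lemma mp_spray (hp : IsMinkowskianProduct U₁ U₂ F₁ F₂ f F)
    {x y : Fin m ⊕ Fin n → ℝ} (h : mpV U₁ U₂ x y) (α : Fin m ⊕ Fin n) :
    spray F α x y = Sum.elim (fun a => pullL (Fin n) (spray F₁ a) x y)
      (fun a => pullR (Fin m) (spray F₂ a) x y) α := by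
  set Q : Fin m ⊕ Fin n → ℝ := Sum.elim (fun a => pullL (Fin n) (spray F₁ a) x y)
      (fun a => pullR (Fin m) (spray F₂ a) x y) with hQ
  refine hp.finsler.spray_unique (show x ∈ {x : Fin m ⊕ Fin n → ℝ | _} from h.1) (mpV_ne h) Q
    (fun β => ?_) α
  have hK1 : 2 * ∑ α, pdy (mpK n F₁) α x y * Q α = ∑ γ, pdx (mpK n F₁) γ x y * y γ := by
    have := hp.finsler₁.spray_contr h.1.1 h.2.1
    simp only [mpK, Fintype.sum_sum_type, pdy_pullL_l, pdy_pullL_r, pdx_pullL_l, pdx_pullL_r, hQ]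
    simpa [pullL] using this
  have hH1 : 2 * ∑ α, pdy (mpH m F₂) α x y * Q α = ∑ γ, pdx (mpH m F₂) γ x y * y γ := by
    have := hp.finsler₂.spray_contr h.1.2 h.2.2
    simp only [mpH, Fintype.sum_sum_type, pdy_pullR_l, pdy_pullR_r, pdx_pullR_l, pdx_pullR_r, hQ]
    simpa [pullR] using this
  have hK2 : 2 * ∑ α, pdy (pdy (mpK n F₁) α) β x y * Q α =
      ∑ γ, pdx (pdy (mpK n F₁) β) γ x y * y γ - pdx (mpK n F₁) β x y := by
    rcases β with b | b
    · have := hp.finsler₁.spray_eq h.1.1 h.2.1 b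
      simp only [mpB, fundTensor] at this
      simp only [mpK, Fintype.sum_sum_type, pdy_pullL_l, pdy_pullL_r, pdx_pullL_l, pdx_pullL_r, hQ,
        pdy_zero', pdx_zero']
      simpa [pullL] using this
    · simp [mpK, pdy_pullL_l, pdy_pullL_r, pdx_pullL_l, pdx_pullL_r, pdy_zero', pdx_zero']
  have hH2 : 2 * ∑ α, pdy (pdy (mpH m F₂) α) β x y * Q α =
      ∑ γ, pdx (pdy (mpH m F₂) β) γ x y * y γ - pdx (mpH m F₂) β x y := by
    rcases β with b | b
    · simp [mpH, pdy_pullR_l, pdy_pullR_r, pdx_pullR_l, pdx_pullR_r, pdy_zero', pdx_zero']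
    · have := hp.finsler₂.spray_eq h.1.2 h.2.2 b
      simp only [mpB, fundTensor] at this
      simp only [mpH, Fintype.sum_sum_type, pdy_pullR_l, pdy_pullR_r, pdx_pullR_l, pdx_pullR_r, hQ,
        pdy_zero', pdx_zero']
      simpa [pullR] using this
  unfold mpB
  simp only [mp_Gyy hp h, mp_Gyx hp h, mp_Gx hp h, mp_symm hp (mp_pos hp h)]
  generalize fderiv ℝ (mpφ1 f) (mpK n F₁ x y, mpH m F₂ x y) (1, 0) = A11
  generalize fderiv ℝ (mpφ2 f) (mpK n F₁ x y, mpH m F₂ x y) (1, 0) = A12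
  generalize fderiv ℝ (mpφ2 f) (mpK n F₁ x y, mpH m F₂ x y) (0, 1) = A22
  generalize mpφ1 f (mpK n F₁ x y, mpH m F₂ x y) = A1
  generalize mpφ2 f (mpK n F₁ x y, mpH m F₂ x y) = A2
  have e1 : ∀ (a b c d : ℝ) (p q r s t : Fin m ⊕ Fin n → ℝ),
      ∑ i, (a * p i + b * q i + (c * r i + d * s i)) * t i =
      a * ∑ i, p i * t i + b * ∑ i, q i * t i + (c * ∑ i, r i * t i + d * ∑ i, s i * t i) := by
    intros
    simp only [Finset.mul_sum, ← Finset.sum_add_distrib]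
    exact Finset.sum_congr rfl fun _ _ => by ring
  rw [e1]
  have e3 : ∑ γ, ((A11 * pdx (mpK n F₁) γ x y + A12 * pdx (mpH m F₂) γ x y) * pdy (mpK n F₁) β x y
      + A1 * pdx (pdy (mpK n F₁) β) γ x y
      + ((A12 * pdx (mpK n F₁) γ x y + A22 * pdx (mpH m F₂) γ x y) * pdy (mpH m F₂) β x y
      + A2 * pdx (pdy (mpH m F₂) β) γ x y)) * y γ =
      (A11 * ∑ γ, pdx (mpK n F₁) γ x y * y γ + A12 * ∑ γ, pdx (mpH m F₂) γ x y * y γ)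
        * pdy (mpK n F₁) β x y + A1 * ∑ γ, pdx (pdy (mpK n F₁) β) γ x y * y γ
      + ((A12 * ∑ γ, pdx (mpK n F₁) γ x y * y γ + A22 * ∑ γ, pdx (mpH m F₂) γ x y * y γ)
        * pdy (mpH m F₂) β x y + A2 * ∑ γ, pdx (pdy (mpH m F₂) β) γ x y * y γ) := by
    simp only [Finset.mul_sum, Finset.sum_mul, ← Finset.sum_add_distrib]
    exact Finset.sum_congr rfl fun _ _ => by ring
  rw [e3, ← hK1, ← hH1]
  linear_combination A1 * hK2 + A2 * hH2

lemma mp_berwald_congr (hp : IsMinkowskianProduct U₁ U₂ F₁ F₂ f F)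
    {g g' : (Fin m ⊕ Fin n → ℝ) → (Fin m ⊕ Fin n → ℝ) → ℝ}
    (hg : ∀ x y, mpV U₁ U₂ x y → g x y = g' x y) (β : Fin m ⊕ Fin n) :
    ∀ x y, mpV U₁ U₂ x y → pdy g β x y = pdy g' β x y := by
  intro x y h
  have e : g x =ᶠ[nhds y] g' x := by
    filter_upwards [mpV_y h] with y' hy'
    exact hg x y' hy'
  simp only [pdy]
  rw [e.fderiv_eq]

lemma mp_berwald_l (hp : IsMinkowskianProduct U₁ U₂ F₁ F₂ f F)
    (a : Fin m) (β γ η : Fin m ⊕ Fin n) {x y : Fin m ⊕ Fin n → ℝ}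
    (h : mpV U₁ U₂ x y) : berwaldCurv F (Sum.inl a) β γ η x y =
      pdy (pdy (pdy (pullL (Fin n) (spray F₁ a)) η) γ) β x y :=
  mp_berwald_congr hp (mp_berwald_congr hp (mp_berwald_congr hp
    (fun _ _ h' => mp_spray hp h' (Sum.inl a)) η) γ) β x y h

lemma mp_berwald_r (hp : IsMinkowskianProduct U₁ U₂ F₁ F₂ f F)
    (a : Fin n) (β γ η : Fin m ⊕ Fin n) {x y : Fin m ⊕ Fin n → ℝ}
    (h : mpV U₁ U₂ x y) : berwaldCurv F (Sum.inr a) β γ η x y =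
      pdy (pdy (pdy (pullR (Fin m) (spray F₂ a)) η) γ) β x y :=
  mp_berwald_congr hp (mp_berwald_congr hp (mp_berwald_congr hp
    (fun _ _ h' => mp_spray hp h' (Sum.inr a)) η) γ) β x y h

end prod

lemma mp_lands {ι : Type*} [Fintype ι] [DecidableEq ι] {U : Set (ι → ℝ)}
    {F : (ι → ℝ) → (ι → ℝ) → ℝ} (hF : IsFinslerMetric U F) {x y : ι → ℝ} (hx : x ∈ U)
    (hy : y ≠ 0) (β γ η : ι) :
    landsbergCurv F β γ η x y =
      -(1 / 4) * ∑ α, pdy (fun x y => F x y ^ 2) α x y * berwaldCurv F α β γ η x y := by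
  unfold landsbergCurv
  rw [Finset.sum_comm]
  congr 1
  refine Finset.sum_congr rfl fun α _ => ?_
  rw [← Finset.sum_mul, hF.euler1 hx hy]


/-- The Landsberg curvature of a Minkowskian product Finsler metric satisfies
`L_{ijl} = f_K·L¹_{ijl}`, `L_{i'j'l'} = f_H·L²_{i'j'l'}`, and every component
with mixed block indices vanishes. -/
theorem landsbergCurv_of_minkowskian_product {m n : ℕ}
    (U₁ : Set (Fin m → ℝ)) (U₂ : Set (Fin n → ℝ))
    (F₁ : (Fin m → ℝ) → (Fin m → ℝ) → ℝ) (F₂ : (Fin n → ℝ) → (Fin n → ℝ) → ℝ)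
    (f : ℝ → ℝ → ℝ) (F : (Fin m ⊕ Fin n → ℝ) → (Fin m ⊕ Fin n → ℝ) → ℝ)
    (hprod : IsMinkowskianProduct U₁ U₂ F₁ F₂ f F) :
    ∀ x : Fin m ⊕ Fin n → ℝ, (x ∘ Sum.inl) ∈ U₁ → (x ∘ Sum.inr) ∈ U₂ →
    ∀ y : Fin m ⊕ Fin n → ℝ, (y ∘ Sum.inl) ≠ 0 → (y ∘ Sum.inr) ≠ 0 →
      (∀ i j l : Fin m,
        landsbergCurv F (Sum.inl i) (Sum.inl j) (Sum.inl l) x y =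
          pderivS f ((F₁ (x ∘ Sum.inl) (y ∘ Sum.inl)) ^ 2)
              ((F₂ (x ∘ Sum.inr) (y ∘ Sum.inr)) ^ 2) *
            landsbergCurv F₁ i j l (x ∘ Sum.inl) (y ∘ Sum.inl)) ∧
      (∀ i' j' l' : Fin n,
        landsbergCurv F (Sum.inr i') (Sum.inr j') (Sum.inr l') x y =
          pderivT f ((F₁ (x ∘ Sum.inl) (y ∘ Sum.inl)) ^ 2)
              ((F₂ (x ∘ Sum.inr) (y ∘ Sum.inr)) ^ 2) *
            landsbergCurv F₂ i' j' l' (x ∘ Sum.inr) (y ∘ Sum.inr)) ∧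
      (∀ β γ η : Fin m ⊕ Fin n,
        ((∃ i : Fin m, β = Sum.inl i) ∨ (∃ i : Fin m, γ = Sum.inl i) ∨
          (∃ i : Fin m, η = Sum.inl i)) →
        ((∃ i' : Fin n, β = Sum.inr i') ∨ (∃ i' : Fin n, γ = Sum.inr i') ∨
          (∃ i' : Fin n, η = Sum.inr i')) →
        landsbergCurv F β γ η x y = 0) := by
  intro x hx1 hx2 y hy1 hy2
  have h : mpV U₁ U₂ x y := ⟨⟨hx1, hx2⟩, hy1, hy2⟩
  have hxU : x ∈ {x : Fin m ⊕ Fin n → ℝ | (x ∘ Sum.inl) ∈ U₁ ∧ (x ∘ Sum.inr) ∈ U₂} := h.1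
  have hl := fun β γ η => mp_lands hprod.finsler hxU (mpV_ne h) β γ η
  have hpos := mp_pos hprod h
  have hGl : ∀ a : Fin m, pdy (fun x y => F x y ^ 2) (Sum.inl a) x y =
      mpφ1 f (mpK n F₁ x y, mpH m F₂ x y) *
        pdy (fun x y => F₁ x y ^ 2) a (x ∘ Sum.inl) (y ∘ Sum.inl) := by
    intro a
    rw [mp_Gy hprod h, mpH, pdy_pullR_l, mul_zero, add_zero]
    congr 1
    rw [mpK, pdy_pullL_l]
    rfl
  have hGr : ∀ a : Fin n, pdy (fun x y => F x y ^ 2) (Sum.inr a) x y =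
      mpφ2 f (mpK n F₁ x y, mpH m F₂ x y) *
        pdy (fun x y => F₂ x y ^ 2) a (x ∘ Sum.inr) (y ∘ Sum.inr) := by
    intro a
    rw [mp_Gy hprod h, mpK, pdy_pullL_r, mul_zero, zero_add]
    congr 1
    rw [mpH, pdy_pullR_r]
    rfl
  have hpS : pderivS f (F₁ (x ∘ Sum.inl) (y ∘ Sum.inl) ^ 2) (F₂ (x ∘ Sum.inr) (y ∘ Sum.inr) ^ 2)
      = mpφ1 f (mpK n F₁ x y, mpH m F₂ x y) := mp_pS hprod hpos.1 hpos.2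
  have hpT : pderivT f (F₁ (x ∘ Sum.inl) (y ∘ Sum.inl) ^ 2) (F₂ (x ∘ Sum.inr) (y ∘ Sum.inr) ^ 2)
      = mpφ2 f (mpK n F₁ x y, mpH m F₂ x y) := mp_pT hprod hpos.1 hpos.2
  refine ⟨fun i j l => ?_, fun i j l => ?_, fun β γ η h1 h2 => ?_⟩
  · rw [hl, mp_lands hprod.finsler₁ hx1 hy1, hpS, Fintype.sum_sum_type]
    simp only [mp_berwald_l hprod _ _ _ _ h, mp_berwald_r hprod _ _ _ _ h, pdy_pullL_l,
      pdy_pullR_l, pdy_zero', hGl, mul_zero, Finset.sum_const_zero, add_zero]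
    rw [mul_left_comm, Finset.mul_sum (a := mpφ1 _ _)]
    simp only [← mul_assoc]
    rfl
  · rw [hl, mp_lands hprod.finsler₂ hx2 hy2, hpT, Fintype.sum_sum_type]
    simp only [mp_berwald_l hprod _ _ _ _ h, mp_berwald_r hprod _ _ _ _ h, pdy_pullL_r,
      pdy_pullR_r, pdy_zero', hGr, mul_zero, Finset.sum_const_zero, zero_add]
    rw [mul_left_comm, Finset.mul_sum (a := mpφ2 _ _)]
    simp only [← mul_assoc]
    rfl
  · rw [hl, Fintype.sum_sum_type]
    rcases β with β | β <;> rcases γ with γ | γ <;> rcases η with η | η <;>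
      first
      | (exfalso; simp at h1; done)
      | (exfalso; simp at h2; done)
      | simp [mp_berwald_l hprod _ _ _ _ h, mp_berwald_r hprod _ _ _ _ h, pdy_pullL_r,
          pdy_pullR_r, pdy_pullL_l, pdy_pullR_l, pdy_zero']
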